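/- Great circles in a common left Hopf bundle are Clifford-parallel, and the Hopf map halves distances: let p, q, r be pure unit quaternions. Then for every x ∈ K_p^q, the geodesic distance d(x, K_r^q) = inf_{y ∈ K_r^q} arccos ⟪x, y⟫ equals (arccos ⟪p, r⟫)/2; in particular this distance does not depend on the choice of x ∈ K_p^q, and d(K_p^q, K_r^q) = d(p, r)/2. -/

import Mathlib

open Quaternion RealInnerProductSpace

/-- The great circle `K_p^q`: the set of unit quaternions `x` with
`(conj x) * p * x = q`. -/
def K (p q : Quaternion ℝ) : Set (Quaternion ℝ) :=
  {x : Quaternion ℝ | ‖x‖ = 1 ∧ star x * p * x = q}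

/-- The geodesic (angular) distance from a point `x` of `S³` to a subset `A` of `S³`:
`d(x, A) = inf_{y ∈ A} arccos ⟪x, y⟫`. -/
noncomputable def sdist (x : Quaternion ℝ) (A : Set (Quaternion ℝ)) : ℝ :=
  sInf ((fun y => Real.arccos ⟪x, y⟫) '' A)

/-!
A unit quaternion lies in `K p q` if and only if it intertwines `p` and `q`, that is
`p * x = x * q`. So these circles form a groupoid, and for `x ∈ K p q`, `y ∈ K r q` the quotient
`u = y * star x` lies in `K r p`, with `⟪x, y⟫ = u.re`. The distance from `x` to `K r q` is
therefore governed by the largest real part on `K r p`, independently of `x`.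

To find it on a circle `K p q`, note that `p * u + u * p = 2 (u.re p - ⟪p, u⟫)` since `p` is pure,
while for `u ∈ K p q` the left side is `u * (p + q)`. Taking norms,
`‖p + q‖² = 4 (u.re² + ⟪p, u⟫²)`, hence `u.re ≤ ‖p + q‖ / 2`, the cosine of half the angle between
`p` and `q`. Equality is attained at the normalization of `1 - p * q`, or, if `q = -p`, at any pure
unit quaternion orthogonal to `p`.
-/

section InnerProductSpace

theorem arccos_norm_add_div_two {E : Type*} [NormedAddCommGroup E] [InnerProductSpace ℝ E]
    {x y : E} (hx : ‖x‖ = 1) (hy : ‖y‖ = 1) :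
    Real.arccos (‖x + y‖ / 2) = Real.arccos ⟪x, y⟫ / 2 := by
  have hpos := Real.arccos_nonneg ⟪x, y⟫
  have hle := Real.arccos_le_pi ⟪x, y⟫
  have hnorm : (‖x + y‖ / 2) ^ 2 = (1 + ⟪x, y⟫) / 2 := by
    rw [div_pow, norm_add_sq_real, hx, hy]
    ring
  refine Real.arccos_eq_of_eq_cos (by linarith) (by linarith) ?_
  rw [Real.cos_half (by linarith) hle,
    Real.cos_arccos (neg_one_le_real_inner_of_norm_eq_one hx hy)
      (real_inner_le_one_of_norm_eq_one hx hy),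
    ← hnorm, Real.sqrt_sq (by positivity)]

theorem exists_norm_eq_one_forall_inner_eq_zero {𝕜 E ι : Type*} [RCLike 𝕜]
    [NormedAddCommGroup E] [InnerProductSpace 𝕜 E] [Fintype ι] (v : ι → E)
    (h : Fintype.card ι < Module.finrank 𝕜 E) :
    ∃ u : E, ‖u‖ = 1 ∧ ∀ i, inner 𝕜 (v i) u = 0 := by
  have : FiniteDimensional 𝕜 E := .of_finrank_pos (Nat.zero_lt_of_lt h)
  have hker : (LinearMap.pi fun i => (innerₛₗ 𝕜 (v i))).ker ≠ ⊥ :=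
    LinearMap.ker_ne_bot_of_finrank_lt (by rwa [Module.finrank_fintype_fun_eq_card])
  obtain ⟨w, hw, hw0⟩ := Submodule.exists_mem_ne_zero_of_ne_bot hker
  refine ⟨(‖w‖ : 𝕜)⁻¹ • w, norm_smul_inv_norm hw0, fun i => ?_⟩
  rw [inner_smul_right, show inner 𝕜 (v i) w = 0 from congrFun hw i, mul_zero]

end InnerProductSpace

section UnitAndPureQuaternion

variable {p x : ℍ[ℝ]}

theorem inner_eq_re_mul_star (x y : ℍ[ℝ]) : ⟪x, y⟫ = (y * star x).re := by
  rw [real_inner_comm, Quaternion.inner_def]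

theorem star_eq_inv_of_norm_eq_one (hx : ‖x‖ = 1) : star x = x⁻¹ := by
  refine eq_inv_of_mul_eq_one_left ?_
  rw [Quaternion.star_mul_self, Quaternion.normSq_eq_norm_mul_self, hx, mul_one,
    Quaternion.coe_one]

theorem mul_self_eq_neg_one_of_re_eq_zero (hp : p.re = 0) (hpn : ‖p‖ = 1) : p * p = -1 := by
  rw [← sq, Quaternion.sq_eq_neg_normSq.mpr hp, Quaternion.normSq_eq_norm_mul_self, hpn]
  simp only [mul_one, Quaternion.coe_one]

theorem mul_add_mul_of_re_eq_zero (hp : p.re = 0) (u : ℍ[ℝ]) :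
    p * u + u * p = (2 : ℝ) • (u.re • p - (⟪p, u⟫ : ℍ[ℝ])) := by
  have hsplit : p * u + u * p = p * (u + star u) - (p * star u + star (p * star u)) := by
    rw [star_mul, star_star, Quaternion.star_eq_neg.mpr hp]
    noncomm_ring
  rw [hsplit, Quaternion.self_add_star', Quaternion.self_add_star', ← Quaternion.inner_def,
    Quaternion.mul_coe_eq_smul, smul_sub, smul_smul, Quaternion.smul_coe]

theorem norm_mul_add_mul_sq_of_re_eq_zero (hp : p.re = 0) (u : ℍ[ℝ]) :
    ‖p * u + u * p‖ ^ 2 = 4 * (u.re ^ 2 * ‖p‖ ^ 2 + ⟪p, u⟫ ^ 2) := by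
  have horth : ⟪u.re • p, (⟪p, u⟫ : ℍ[ℝ])⟫ = 0 := by
    simp [Quaternion.inner_def, hp]
  rw [mul_add_mul_of_re_eq_zero hp, norm_smul, mul_pow, norm_sub_sq_real, horth, norm_smul,
    Quaternion.norm_coe, mul_pow, Real.norm_eq_abs, Real.norm_eq_abs, Real.norm_eq_abs,
    sq_abs, sq_abs, sq_abs]
  ring

end UnitAndPureQuaternion

section GreatCircle

variable {p q r u x y : ℍ[ℝ]}

theorem mem_K_iff : x ∈ K p q ↔ ‖x‖ = 1 ∧ SemiconjBy x q p := by
  refine and_congr_right fun hx => ?_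
  have hx0 : x ≠ 0 := norm_ne_zero_iff.mp (hx ▸ one_ne_zero)
  rw [star_eq_inv_of_norm_eq_one hx, mul_assoc, inv_mul_eq_iff_eq_mul₀ hx0, eq_comm, SemiconjBy]

theorem star_mem_K (hx : x ∈ K p q) : star x ∈ K q p := by
  obtain ⟨hxn, hconj⟩ := mem_K_iff.mp hx
  refine mem_K_iff.mpr ⟨by rw [Quaternion.norm_star, hxn], ?_⟩
  rw [star_eq_inv_of_norm_eq_one hxn]
  exact hconj.inv_symm_left₀

theorem mul_mem_K (hu : u ∈ K r p) (hx : x ∈ K p q) : u * x ∈ K r q := by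
  obtain ⟨hun, hur⟩ := mem_K_iff.mp hu
  obtain ⟨hxn, hxp⟩ := mem_K_iff.mp hx
  exact mem_K_iff.mpr ⟨by rw [norm_mul, hun, hxn, mul_one], hur.mul_left hxp⟩

theorem norm_add_sq_of_mem_K (hp : p.re = 0) (hpn : ‖p‖ = 1) (hu : u ∈ K p q) :
    ‖p + q‖ ^ 2 = 4 * (u.re ^ 2 + ⟪p, u⟫ ^ 2) := by
  obtain ⟨hun, hpu⟩ := mem_K_iff.mp hu
  have hfactor : p * u + u * p = u * (p + q) := by rw [← hpu.eq, ← mul_add, add_comm]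
  have hnorm := norm_mul_add_mul_sq_of_re_eq_zero hp u
  rwa [hfactor, norm_mul, hun, one_mul, hpn, one_pow, mul_one] at hnorm

theorem re_le_of_mem_K (hp : p.re = 0) (hpn : ‖p‖ = 1) (hu : u ∈ K p q) :
    u.re ≤ ‖p + q‖ / 2 := by
  refine le_of_sq_le_sq ?_ (by positivity)
  rw [div_pow, norm_add_sq_of_mem_K hp hpn hu]
  linarith [sq_nonneg ⟪p, u⟫]

theorem exists_mem_K_neg_re_eq_zero (hp : p.re = 0) : ∃ u ∈ K p (-p), u.re = 0 := by
  obtain ⟨u, hun, hu⟩ := exists_norm_eq_one_forall_inner_eq_zero (𝕜 := ℝ) ![1, p]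
    (by simp [Quaternion.finrank_eq_four])
  have hure : u.re = 0 := by simpa [Quaternion.inner_def] using hu 0
  have hpu : ⟪p, u⟫ = 0 := hu 1
  have hanti : p * u + u * p = 0 := by simp [mul_add_mul_of_re_eq_zero hp, hure, hpu]
  refine ⟨u, mem_K_iff.mpr ⟨hun, ?_⟩, hure⟩
  rw [SemiconjBy, mul_neg, ← eq_neg_of_add_eq_zero_left hanti]

theorem exists_mem_K_re_eq (hp : p.re = 0) (hpn : ‖p‖ = 1) (hq : q.re = 0) (hqn : ‖q‖ = 1) :
    ∃ u ∈ K p q, u.re = ‖p + q‖ / 2 := by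
  rcases eq_or_ne (p + q) 0 with hpq | hpq
  · rw [hpq, norm_zero, zero_div, ← neg_eq_of_add_eq_zero_right hpq]
    exact exists_mem_K_neg_re_eq_zero hp
  have hpp := mul_self_eq_neg_one_of_re_eq_zero hp hpn
  have hqq := mul_self_eq_neg_one_of_re_eq_zero hq hqn
  have hleft : p * (1 - p * q) = p + q := by
    rw [mul_sub, ← mul_assoc, hpp, mul_one, neg_one_mul, sub_neg_eq_add]
  have hright : (1 - p * q) * q = p + q := by
    rw [sub_mul, mul_assoc, hqq, one_mul, mul_neg_one, sub_neg_eq_add, add_comm]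
  have hnorm : ‖1 - p * q‖ = ‖p + q‖ := by rw [← hleft, norm_mul, hpn, one_mul]
  have hre : (1 - p * q).re = ‖p + q‖ ^ 2 / 2 := by
    rw [norm_add_sq_real, hpn, hqn, Quaternion.inner_def, Quaternion.star_eq_neg.mpr hq, mul_neg,
      Quaternion.re_neg, Quaternion.re_sub, Quaternion.re_one]
    ring
  have hne : ‖p + q‖ ≠ 0 := norm_ne_zero_iff.mpr hpq
  refine ⟨‖p + q‖⁻¹ • (1 - p * q), mem_K_iff.mpr ⟨?_, ?_⟩, ?_⟩
  · rw [norm_smul, norm_inv, norm_norm, hnorm, inv_mul_cancel₀ hne]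
  · rw [SemiconjBy, smul_mul_assoc, mul_smul_comm, hleft, hright]
  · rw [Quaternion.re_smul, hre, smul_eq_mul]
    field_simp

theorem arccos_inner_div_two_le_of_mem_K (hpn : ‖p‖ = 1) (hr : r.re = 0) (hrn : ‖r‖ = 1)
    (hx : x ∈ K p q) (hy : y ∈ K r q) :
    Real.arccos ⟪p, r⟫ / 2 ≤ Real.arccos ⟪x, y⟫ := by
  rw [← arccos_norm_add_div_two hpn hrn, inner_eq_re_mul_star, add_comm p r]
  exact Real.arccos_le_arccos (re_le_of_mem_K hr hrn (mul_mem_K hy (star_mem_K hx)))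

theorem exists_mem_K_arccos_inner_eq (hp : p.re = 0) (hpn : ‖p‖ = 1) (hr : r.re = 0)
    (hrn : ‖r‖ = 1) (hx : x ∈ K p q) :
    ∃ y ∈ K r q, Real.arccos ⟪x, y⟫ = Real.arccos ⟪p, r⟫ / 2 := by
  obtain ⟨u, hu, hure⟩ := exists_mem_K_re_eq hr hrn hp hpn
  have hinner : ⟪x, u * x⟫ = u.re := by
    have hx0 : x ≠ 0 := norm_ne_zero_iff.mp (hx.1 ▸ one_ne_zero)
    rw [inner_eq_re_mul_star, star_eq_inv_of_norm_eq_one hx.1, mul_inv_cancel_right₀ hx0]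
  refine ⟨u * x, mul_mem_K hu hx, ?_⟩
  rw [hinner, hure, add_comm, arccos_norm_add_div_two hpn hrn]

end GreatCircle

theorem statement12 (p q r : Quaternion ℝ)
    (hp : p.re = 0) (hpn : ‖p‖ = 1) (hq : q.re = 0) (hqn : ‖q‖ = 1)
    (hr : r.re = 0) (hrn : ‖r‖ = 1) :
    (∀ x ∈ K p q, sdist x (K r q) = Real.arccos ⟪p, r⟫ / 2) ∧
    sInf ((fun z : Quaternion ℝ × Quaternion ℝ => Real.arccos ⟪z.1, z.2⟫) ''
        (K p q ×ˢ K r q)) = Real.arccos ⟪p, r⟫ / 2 := by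
  refine ⟨fun x hx => ?_, ?_⟩
  · obtain ⟨y, hy, hxy⟩ := exists_mem_K_arccos_inner_eq hp hpn hr hrn hx
    refine IsLeast.csInf_eq ⟨⟨y, hy, hxy⟩, ?_⟩
    rintro _ ⟨z, hz, rfl⟩
    exact arccos_inner_div_two_le_of_mem_K hpn hr hrn hx hz
  · obtain ⟨x, hx, -⟩ := exists_mem_K_re_eq hp hpn hq hqn
    obtain ⟨y, hy, hxy⟩ := exists_mem_K_arccos_inner_eq hp hpn hr hrn hx
    refine IsLeast.csInf_eq ⟨⟨(x, y), ⟨hx, hy⟩, hxy⟩, ?_⟩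
    rintro _ ⟨⟨x', z⟩, ⟨hx', hz⟩, rfl⟩
    exact arccos_inner_div_two_le_of_mem_K hpn hr hrn hx' hz
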